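/- arXiv:2410.22695 — 3 statements merged into one kernel-verified Lean document; each statement's English description precedes it below -/
import Mathlib

section
/- For any p̂ ∈ Ω and losses L₁, L₂ (with the relevant Bayes updates well defined), the particle-filter outputs after applying the two losses in either order satisfy D(p̂[L₁, L₂], p̂[L₂, L₁]) ≤ 2ε · (C² − 1)/(C − 1). -/
/-!
The discrepancy `D` is a pseudometric, and assumption (7) says that one filtering step
enlarges the distance to the exact Bayes trajectory by a factor at most `C`, plus an error `ε`.
Hence after `T` losses the filter is within `ε * (1 + C + ⋯ + C ^ (T - 1))` of the exact posterior.
Exact Bayes updates are exponential tiltings, so they commute and the exact posterior does not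
depend on the order of the losses: two orderings of the filter are each close to the same measure.
-/

open MeasureTheory

/-- The exact Bayes update of a Borel measure `p` on `ℝ^d` by a loss `L`:
the measure with density `x ↦ e^{-L x} / ∫ e^{-L x'} dp(x')` with respect to `p`
(defined when `∫ e^{-L} dp > 0`). -/
noncomputable def bayesUpdate {d : ℕ} (p : Measure (EuclideanSpace ℝ (Fin d)))
    (L : EuclideanSpace ℝ (Fin d) → ℝ) : Measure (EuclideanSpace ℝ (Fin d)) :=
  p.withDensity fun x =>
    ENNReal.ofReal (Real.exp (-(L x)) / ∫ x', Real.exp (-(L x')) ∂p)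

section Filtering

variable {Ω Λ : Type*} [PseudoMetricSpace Ω] {U B : Ω → Λ → Ω} {C ε : ℝ}

theorem dist_foldl_foldl_le (hC : 0 ≤ C)
    (hUB : ∀ p q L, dist (U p L) (B q L) ≤ C * dist p q + ε) (l : List Λ) (p q : Ω) :
    dist (l.foldl U p) (l.foldl B q) ≤
      C ^ l.length * dist p q + ε * ∑ i ∈ Finset.range l.length, C ^ i := by
  induction l generalizing p q with
  | nil => simp
  | cons L l ih =>
    rw [List.foldl_cons, List.foldl_cons, List.length_cons, Finset.sum_range_succ]
    calc dist (l.foldl U (U p L)) (l.foldl B (B q L))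
        ≤ C ^ l.length * dist (U p L) (B q L) + ε * ∑ i ∈ Finset.range l.length, C ^ i := ih _ _
      _ ≤ C ^ l.length * (C * dist p q + ε) + ε * ∑ i ∈ Finset.range l.length, C ^ i := by
        gcongr
        exact hUB p q L
      _ = C ^ (l.length + 1) * dist p q +
          ε * (∑ i ∈ Finset.range l.length, C ^ i + C ^ l.length) := by ring

theorem dist_foldl_foldl_le_of_perm [RightCommutative B] (hC : 0 ≤ C)
    (hUB : ∀ p q L, dist (U p L) (B q L) ≤ C * dist p q + ε) {l₁ l₂ : List Λ} (h : l₁.Perm l₂)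
    (p : Ω) :
    dist (l₁.foldl U p) (l₂.foldl U p) ≤ 2 * ε * ∑ i ∈ Finset.range l₁.length, C ^ i := by
  have filter_near_exact (l : List Λ) :
      dist (l.foldl U p) (l.foldl B p) ≤ ε * ∑ i ∈ Finset.range l.length, C ^ i := by
    simpa using dist_foldl_foldl_le hC hUB l p p
  have exact_eq : l₁.foldl B p = l₂.foldl B p := h.foldl_eq p
  calc dist (l₁.foldl U p) (l₂.foldl U p)
      ≤ dist (l₁.foldl U p) (l₁.foldl B p) + dist (l₂.foldl U p) (l₁.foldl B p) :=
        dist_triangle_right _ _ _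
    _ = dist (l₁.foldl U p) (l₁.foldl B p) + dist (l₂.foldl U p) (l₂.foldl B p) := by
        rw [exact_eq]
    _ ≤ ε * ∑ i ∈ Finset.range l₁.length, C ^ i + ε * ∑ i ∈ Finset.range l₁.length, C ^ i :=
        add_le_add (filter_near_exact l₁) (h.length_eq ▸ filter_near_exact l₂)
    _ = 2 * ε * ∑ i ∈ Finset.range l₁.length, C ^ i := by ring

end Filtering

section Bayes

variable {X : Type*} [MeasurableSpace X]

variable (X) in
/-- The loss functions on `X`, bundled so that exact and approximate updates are total maps
`ProbabilityMeasure X → Loss X → ProbabilityMeasure X`. -/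
abbrev Loss : Type _ :=
  {L : X → ℝ // Measurable L ∧ ∀ x, 0 ≤ L x}

theorem Loss.integrable_exp_neg (L : Loss X) (p : Measure X) [IsFiniteMeasure p] :
    Integrable (fun x => Real.exp (-L.1 x)) p := by
  have hL : Measurable L.1 := L.2.1
  refine Integrable.of_bound (C := 1) (by fun_prop) (.of_forall fun x => ?_)
  simpa using L.2.2 x

/-- The exact Bayes update of a probability measure by a loss, as an exponential tilting
so that the commutation of updates is `tilted_comm`. -/
noncomputable def bayesPosterior (p : ProbabilityMeasure X) (L : Loss X) : ProbabilityMeasure X :=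
  ⟨(p : Measure X).tilted fun x => -L.1 x, isProbabilityMeasure_tilted (L.integrable_exp_neg p)⟩

theorem coe_bayesPosterior {d : ℕ} (p : ProbabilityMeasure (EuclideanSpace ℝ (Fin d)))
    (L : Loss (EuclideanSpace ℝ (Fin d))) :
    (bayesPosterior p L : Measure (EuclideanSpace ℝ (Fin d))) = bayesUpdate p L.1 :=
  rfl

instance : RightCommutative (bayesPosterior (X := X)) where
  right_comm p L M :=
    Subtype.ext (tilted_comm (L.integrable_exp_neg p) (M.integrable_exp_neg p))

theorem particleFilter_two_losses_swap_general
    (D : ProbabilityMeasure X → ProbabilityMeasure X → ℝ)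
    (hD_symm : ∀ p q, D p q = D q p) (hD_tri : ∀ p q r, D p q ≤ D p r + D r q)
    (hD_refl : ∀ p, D p p = 0)
    (U : ProbabilityMeasure X → Loss X → ProbabilityMeasure X) {C ε : ℝ} (hC : 0 ≤ C)
    (hU : ∀ phat p L, D (U phat L) (bayesPosterior p L) ≤ C * D phat p + ε)
    {l₁ l₂ : List (Loss X)} (h : l₁.Perm l₂) (phat : ProbabilityMeasure X) :
    D (l₁.foldl U phat) (l₂.foldl U phat) ≤ 2 * ε * ∑ i ∈ Finset.range l₁.length, C ^ i := by
  let _ : PseudoMetricSpace (ProbabilityMeasure X) :=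
    { dist := D
      dist_self := hD_refl
      dist_comm := hD_symm
      dist_triangle := fun p q r => hD_tri p r q }
  exact dist_foldl_foldl_le_of_perm hC hU h phat

end Bayes

/-- Applying two particle-filter updates in either order gives nearly the same output:
`D(p̂[L₁,L₂], p̂[L₂,L₁]) ≤ 2ε·(C² − 1)/(C − 1)`. -/
theorem particleFilter_two_losses_swap
    {d : ℕ}
    -- discrepancy measure `D` on the space `Ω` of Borel probability measures on `ℝ^d`
    (D : Measure (EuclideanSpace ℝ (Fin d)) → Measure (EuclideanSpace ℝ (Fin d)) → ℝ)
    (hD_nonneg : ∀ p q, IsProbabilityMeasure p → IsProbabilityMeasure q → 0 ≤ D p q)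
    (hD_symm : ∀ p q, IsProbabilityMeasure p → IsProbabilityMeasure q → D p q = D q p)
    (hD_tri : ∀ p q r, IsProbabilityMeasure p → IsProbabilityMeasure q →
      IsProbabilityMeasure r → D p q ≤ D p r + D r q)
    (hD_refl : ∀ p, IsProbabilityMeasure p → D p p = 0)
    -- particle-filter update `U`, sending `phat ∈ Ω` and a loss `L` to `U phat L ∈ Ω`
    (U : Measure (EuclideanSpace ℝ (Fin d)) → (EuclideanSpace ℝ (Fin d) → ℝ) →
      Measure (EuclideanSpace ℝ (Fin d)))
    (hU_prob : ∀ p L, IsProbabilityMeasure p → Measurable L → (∀ x, 0 ≤ L x) →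
      IsProbabilityMeasure (U p L))
    -- constants
    (C ε : ℝ) (hC : 1 < C) (hε : 0 ≤ ε)
    -- assumption (6)
    (h6 : ∀ p q L, IsProbabilityMeasure p → IsProbabilityMeasure q → Measurable L →
      (∀ x, 0 ≤ L x) → D (U p L) (U q L) ≤ C * D p q)
    -- assumption (7)
    (h7 : ∀ phat p L, IsProbabilityMeasure phat → IsProbabilityMeasure p → Measurable L →
      (∀ x, 0 ≤ L x) → 0 < ∫ x, Real.exp (-(L x)) ∂p →
      D (U phat L) (bayesUpdate p L) ≤ C * D phat p + ε)
    -- a probability measure and two losses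
    (phat : Measure (EuclideanSpace ℝ (Fin d))) (hphat : IsProbabilityMeasure phat)
    (L₁ L₂ : EuclideanSpace ℝ (Fin d) → ℝ)
    (hmeas₁ : Measurable L₁) (hmeas₂ : Measurable L₂)
    (hnonneg₁ : ∀ x, 0 ≤ L₁ x) (hnonneg₂ : ∀ x, 0 ≤ L₂ x)
    -- the relevant Bayes updates are well defined
    (hwd₁ : ∀ q : Measure (EuclideanSpace ℝ (Fin d)), IsProbabilityMeasure q →
      0 < ∫ x, Real.exp (-(L₁ x)) ∂q)
    (hwd₂ : ∀ q : Measure (EuclideanSpace ℝ (Fin d)), IsProbabilityMeasure q →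
      0 < ∫ x, Real.exp (-(L₂ x)) ∂q) :
    D (U (U phat L₁) L₂) (U (U phat L₂) L₁) ≤ 2 * ε * (C ^ 2 - 1) / (C - 1) := by
  rw [mul_div_assoc, ← geom_sum_eq hC.ne']
  exact particleFilter_two_losses_swap_general (fun p q => D p q)
    (fun p q => hD_symm p q p.2 q.2) (fun p q r => hD_tri p q r p.2 q.2 r.2)
    (fun p => hD_refl p p.2) (fun p L => ⟨U p L.1, hU_prob p L.1 p.2 L.2.1 L.2.2⟩)
    (zero_le_one.trans hC.le)
    (fun q p L => coe_bayesPosterior p L ▸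
      h7 q p L.1 q.2 p.2 L.2.1 L.2.2 (integral_exp_pos (L.integrable_exp_neg p)))
    (List.Perm.swap ⟨L₂, hmeas₂, hnonneg₂⟩ ⟨L₁, hmeas₁, hnonneg₁⟩ []) ⟨phat, hphat⟩
end

section
/- Let x₀ ∈ ℝ^d, σ² > 0, and let L_t(x) = ⟪g_t, x⟫ + b_t (g_t ∈ ℝ^d, b_t ∈ ℝ) for t = 1, …, T be linear loss functions. Define the gradient-descent trajectory x_t = x_{t−1} − σ²·g_t. Then the accumulated trapezoidal loss sums along the trajectory satisfy ∑_{t=1}^T (L_t(x_{t−1}) + L_t(x_t)) = ∑_{t=1}^T (L_t(x₀) + L_t(x_T)); consequently the final particle weight w_T = exp(−(1/2)·∑_{t=1}^T (L_t(x_t) + L_t(x_{t−1}))) equals exp(−(1/2)·∑_{t=1}^T (L_t(x₀) + L_t(x_T))). -/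
open scoped RealInnerProductSpace

/-!
With `G n = g 0 + ⋯ + g (n - 1)`, the trajectory is `x n = x 0 - η • G n`. For a symmetric bilinear
form `B`, the sum of `B (g t) (G t + G (t + 1)) = B (G (t + 1)) (G (t + 1)) - B (G t) (G t)` over
`t < T` telescopes to `B (G T) (G T)`. Hence the linear parts of the losses contribute
`2 B (G T) (x 0) - η B (G T) (G T) = B (G T) (x 0 + x T)`.
-/

theorem eq_sub_smul_sum_range_of_succ_eq_sub_smul {R M : Type*} [Ring R] [AddCommGroup M]
    [Module R M] {η : R} {g x : ℕ → M} (hx : ∀ t, x (t + 1) = x t - η • g t) (n : ℕ) :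
    x n = x 0 - η • ∑ t ∈ Finset.range n, g t := by
  induction n with
  | zero => simp
  | succ n ih => rw [hx, ih, Finset.sum_range_succ, smul_add, sub_sub]

theorem sum_range_bilinForm_apply_partial_sum_add_succ {R M : Type*} [CommSemiring R]
    [AddCommMonoid M] [Module R M] {B : LinearMap.BilinForm R M} (hB : B.IsSymm)
    (g : ℕ → M) (n : ℕ) :
    ∑ t ∈ Finset.range n,
        B (g t) (∑ s ∈ Finset.range t, g s + ∑ s ∈ Finset.range (t + 1), g s) =
      B (∑ t ∈ Finset.range n, g t) (∑ t ∈ Finset.range n, g t) := by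
  induction n with
  | zero => simp
  | succ n ih =>
    rw [Finset.sum_range_succ, ih, Finset.sum_range_succ]
    simp only [map_add, LinearMap.add_apply]
    rw [hB.eq (∑ t ∈ Finset.range n, g t) (g n)]
    ring

theorem sum_range_bilinForm_apply_add_succ_of_succ_eq_sub_smul {R M : Type*} [CommRing R]
    [AddCommGroup M] [Module R M] {B : LinearMap.BilinForm R M} (hB : B.IsSymm) {η : R}
    {g x : ℕ → M} (hx : ∀ t, x (t + 1) = x t - η • g t) (n : ℕ) :
    ∑ t ∈ Finset.range n, B (g t) (x t + x (t + 1)) =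
      ∑ t ∈ Finset.range n, B (g t) (x 0 + x n) := by
  let G : ℕ → M := fun n => ∑ t ∈ Finset.range n, g t
  have hxG : ∀ t, x t = x 0 - η • G t := eq_sub_smul_sum_range_of_succ_eq_sub_smul hx
  have hstep (t : ℕ) : B (g t) (x t + x (t + 1)) =
      B (g t) (2 • x 0) - η * B (g t) (G t + G (t + 1)) := by
    rw [hxG t, hxG (t + 1), ← smul_eq_mul, ← map_smul, ← map_sub]
    congr 1
    module
  calc
    ∑ t ∈ Finset.range n, B (g t) (x t + x (t + 1))
      = B (G n) (2 • x 0) - η * ∑ t ∈ Finset.range n, B (g t) (G t + G (t + 1)) := by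
        simp only [hstep, Finset.sum_sub_distrib, Finset.mul_sum, G, map_sum, LinearMap.sum_apply]
    _ = B (G n) (2 • x 0) - η * B (G n) (G n) := by
        rw [sum_range_bilinForm_apply_partial_sum_add_succ hB]
    _ = B (G n) (x 0 + x n) := by
        rw [hxG n, ← smul_eq_mul, ← map_smul, ← map_sub]
        congr 1
        module
    _ = ∑ t ∈ Finset.range n, B (g t) (x 0 + x n) := by
        simp only [G, map_sum, LinearMap.sum_apply]

theorem gradient_particleFilter_trapezoid_sum_general {V : Type*} [AddCommGroup V] [Module ℝ V]
    {B : LinearMap.BilinForm ℝ V} (hB : B.IsSymm) (T : ℕ) (σ2 : ℝ) (g : ℕ → V) (b : ℕ → ℝ)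
    (L : ℕ → V → ℝ) (hL : ∀ t x, L t x = B (g t) x + b t)
    (x : ℕ → V) (hx : ∀ t, x (t + 1) = x t - σ2 • g t) :
    (∑ t ∈ Finset.range T, (L t (x t) + L t (x (t + 1)))) =
      (∑ t ∈ Finset.range T, (L t (x 0) + L t (x T))) ∧
    Real.exp (-(1 / 2) * ∑ t ∈ Finset.range T, (L t (x (t + 1)) + L t (x t))) =
      Real.exp (-(1 / 2) * ∑ t ∈ Finset.range T, (L t (x 0) + L t (x T))) := by
  have hL_add (t : ℕ) (y z : V) : L t y + L t z = B (g t) (y + z) + 2 * b t := by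
    rw [hL, hL, map_add]
    ring
  have hsum : ∑ t ∈ Finset.range T, (L t (x t) + L t (x (t + 1))) =
      ∑ t ∈ Finset.range T, (L t (x 0) + L t (x T)) := by
    simp only [hL_add, Finset.sum_add_distrib,
      sum_range_bilinForm_apply_add_succ_of_succ_eq_sub_smul hB hx T]
  refine ⟨hsum, ?_⟩
  rw [← hsum]
  simp only [add_comm]

/-- For linear losses `L t x = ⟪g t, x⟫ + b t` and the gradient-descent trajectory
`x_{t+1} = x_t − σ²·g_t`, the accumulated trapezoidal loss sums along the trajectory
satisfy `∑_t (L_t(x_t) + L_t(x_{t+1})) = ∑_t (L_t(x_0) + L_t(x_T))`; consequently the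
final particle weight `exp(−(1/2)·∑_t (L_t(x_{t+1}) + L_t(x_t)))` equals
`exp(−(1/2)·∑_t (L_t(x_0) + L_t(x_T)))`. (Steps are indexed `0, …, T−1` here.) -/
theorem gradient_particleFilter_trapezoid_sum
    {d : ℕ} (T : ℕ) (σ2 : ℝ) (hσ2 : 0 < σ2)
    (g : ℕ → EuclideanSpace ℝ (Fin d)) (b : ℕ → ℝ)
    (L : ℕ → EuclideanSpace ℝ (Fin d) → ℝ)
    (hL : ∀ t x, L t x = ⟪g t, x⟫ + b t)
    (x : ℕ → EuclideanSpace ℝ (Fin d))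
    (hx : ∀ t, x (t + 1) = x t - σ2 • g t) :
    (∑ t ∈ Finset.range T, (L t (x t) + L t (x (t + 1)))) =
      (∑ t ∈ Finset.range T, (L t (x 0) + L t (x T))) ∧
    Real.exp (-(1 / 2) * ∑ t ∈ Finset.range T, (L t (x (t + 1)) + L t (x t))) =
      Real.exp (-(1 / 2) * ∑ t ∈ Finset.range T, (L t (x 0) + L t (x T))) :=
  gradient_particleFilter_trapezoid_sum_general (B := innerₗ _) ⟨isSymm_inner.eq⟩ T σ2 g b L hL x hx
end

section
/- (Exact mixture update under a linear loss) Let L(x) = ⟪g, x⟫ + b be a linear function on ℝ^d, let σ > 0, and let μ₁, …, μ_N ∈ ℝ^d and w₁, …, w_N ≥ 0. Define μ_i' = μ_i − σ²·g and w_i' = w_i · exp(−(L(μ_i') + L(μ_i))/2). Then for every x ∈ ℝ^d, exp(−L(x)) · ∑_{i=1}^N w_i · exp(−‖x − μ_i‖²/(2σ²)) = ∑_{i=1}^N w_i' · exp(−‖x − μ_i'‖²/(2σ²)); that is, the Bayes reweighting e^{−L} of an isotropic Gaussian mixture by a linear loss is again an isotropic Gaussian mixture of the same variance, whose component means are the gradient-descent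 updates of the original means and whose component weights are multiplied by exp(−(L(μ_i') + L(μ_i))/2). -/
open scoped RealInnerProductSpace

/-!
Let `v = σ²` and `m' = m - v • g`. The difference of squared distances
`‖x - m'‖² - ‖x - m‖²` is affine in `x`, with gradient `2v • g`, and it vanishes at the midpoint of
`m` and `m'`. Divided by `2v` it is therefore `L x - L (midpoint m m')`, and since `L` is affine its
value at the midpoint is `(L m' + L m) / 2`. Exponentiating, the loss factor at `x` is traded for a
factor that depends on `m` only.
-/

section AffineLoss

variable {E : Type*} [NormedAddCommGroup E] [InnerProductSpace ℝ E]

theorem norm_sub_sq_sub_norm_sub_sq_eq_inner_midpoint (x p q : E) :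
    ‖x - q‖ ^ 2 - ‖x - p‖ ^ 2 = 2 * ⟪p - q, x - midpoint ℝ p q⟫ := by
  rw [midpoint_eq_smul_add, invOf_eq_inv]
  simp only [norm_sub_sq_real, inner_sub_left, inner_sub_right, inner_add_right,
    real_inner_smul_right, real_inner_self_eq_norm_sq, real_inner_comm]
  ring

variable {g : E} {b v : ℝ} {L : E → ℝ}

theorem apply_midpoint_of_eq_inner_add (hL : ∀ y, L y = ⟪g, y⟫ + b) (p q : E) :
    L (midpoint ℝ p q) = (L p + L q) / 2 := by
  rw [midpoint_eq_smul_add, invOf_eq_inv]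
  simp only [hL, real_inner_smul_right, inner_add_right]
  ring

theorem norm_sub_gradient_step_sq_div (hv : v ≠ 0) (hL : ∀ y, L y = ⟪g, y⟫ + b) (m x : E) :
    ‖x - (m - v • g)‖ ^ 2 / (2 * v) =
      ‖x - m‖ ^ 2 / (2 * v) + (L x - (L (m - v • g) + L m) / 2) := by
  set c := midpoint ℝ m (m - v • g) with hc
  have norm_diff : ‖x - (m - v • g)‖ ^ 2 - ‖x - m‖ ^ 2 = 2 * v * ⟪g, x - c⟫ := by
    rw [norm_sub_sq_sub_norm_sub_sq_eq_inner_midpoint, sub_sub_cancel, real_inner_smul_left,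
      mul_assoc]
  have loss_diff : L x - (L (m - v • g) + L m) / 2 = ⟪g, x - c⟫ := by
    rw [add_comm (L _), ← apply_midpoint_of_eq_inner_add hL, ← hc, hL, hL, inner_sub_right,
      add_sub_add_right_eq_sub]
  rw [loss_diff, eq_add_of_sub_eq' norm_diff, add_div, mul_div_cancel_left₀ _ (by simpa using hv)]

theorem exp_neg_mul_gaussian_eq_gradient_step (hv : v ≠ 0) (hL : ∀ y, L y = ⟪g, y⟫ + b)
    (m x : E) :
    Real.exp (-(L x)) * Real.exp (-(‖x - m‖ ^ 2 / (2 * v))) =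
      Real.exp (-((L (m - v • g) + L m) / 2)) *
        Real.exp (-(‖x - (m - v • g)‖ ^ 2 / (2 * v))) := by
  rw [← Real.exp_add, ← Real.exp_add, norm_sub_gradient_step_sq_div hv hL]
  ring_nf

theorem gaussian_mixture_linear_bayes_update_general {ι : Type*} (hv : v ≠ 0)
    (hL : ∀ y, L y = ⟪g, y⟫ + b) (μ : ι → E) (w : ι → ℝ) (x : E) {s : ℝ}
    (hs : HasSum (fun i => w i * Real.exp (-(‖x - μ i‖ ^ 2 / (2 * v)))) s) :
    HasSum (fun i => w i * Real.exp (-((L (μ i - v • g) + L (μ i)) / 2)) *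
        Real.exp (-(‖x - (μ i - v • g)‖ ^ 2 / (2 * v))))
      (Real.exp (-(L x)) * s) := by
  simpa only [mul_assoc, mul_left_comm (Real.exp (-(L x))),
    exp_neg_mul_gaussian_eq_gradient_step hv hL] using hs.mul_left (Real.exp (-(L x)))

end AffineLoss

/-- Exact mixture update under a linear loss: the Bayes reweighting by `e^{−L}`, for a
linear loss `L x = ⟪g, x⟫ + b`, of an isotropic Gaussian mixture of variance `σ²` is
again an isotropic Gaussian mixture of the same variance, whose component means are the
gradient-descent updates `μᵢ' = μᵢ − σ²·g` of the original means and whose component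
weights are multiplied by `exp(−(L(μᵢ') + L(μᵢ))/2)`. -/
theorem gaussian_mixture_linear_bayes_update
    {d : ℕ} (g : EuclideanSpace ℝ (Fin d)) (b σ : ℝ) (hσ : 0 < σ)
    (L : EuclideanSpace ℝ (Fin d) → ℝ) (hL : ∀ x, L x = ⟪g, x⟫ + b)
    {N : ℕ} (μ : Fin N → EuclideanSpace ℝ (Fin d)) (w : Fin N → ℝ)
    (hw : ∀ i, 0 ≤ w i)
    (μ' : Fin N → EuclideanSpace ℝ (Fin d)) (hμ' : ∀ i, μ' i = μ i - σ ^ 2 • g)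
    (w' : Fin N → ℝ) (hw' : ∀ i, w' i = w i * Real.exp (-((L (μ' i) + L (μ i)) / 2))) :
    ∀ x : EuclideanSpace ℝ (Fin d),
      Real.exp (-(L x)) * ∑ i, w i * Real.exp (-(‖x - μ i‖ ^ 2 / (2 * σ ^ 2))) =
        ∑ i, w' i * Real.exp (-(‖x - μ' i‖ ^ 2 / (2 * σ ^ 2))) := by
  intro x
  simp only [hw', hμ']
  exact (gaussian_mixture_linear_bayes_update_general (pow_ne_zero 2 hσ.ne') hL μ w x
    (hasSum_fintype _)).unique (hasSum_fintype _)
end
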